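/- Let n ≥ 2 and let φ be a Young function. If Ψ : L^φ(ℝⁿ, |x|dx) → ℝⁿ is a continuous and SL(n) covariant valuation (with Ψ(h₁) = Ψ(h₂) whenever h₁ = h₂ almost everywhere), then there exists a continuous function ξ : ℝ → ℝ with ξ(0) = 0 such that Ψ(α χ_M) = ξ(α) m(M) for every α ∈ ℝ, every R > 0, and every measurable set M ⊆ {x ∈ ℝⁿ : |x| < R}, where m(M) = ∫_M x dx. -/

import Mathlib

open MeasureTheory Filter Set Topology TopologicalSpace
open scoped ENNReal

noncomputable section

/-- `ℝⁿ` with the Euclidean norm. -/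
abbrev En (n : ℕ) := EuclideanSpace ℝ (Fin n)

/-- `φ : ℝ → ℝ` is a Young function (viewed as a function on `[0,∞)`):
`φ t = ∫₀ᵗ ψ(s) ds` for a non-decreasing, right-continuous `ψ` with `ψ 0 = 0`,
`ψ s > 0` for `s > 0` and `ψ s → ∞` as `s → ∞`. -/
def IsYoung (φ : ℝ → ℝ) : Prop :=
  ∃ ψ : ℝ → ℝ, (∀ s : ℝ, 0 ≤ s → 0 ≤ ψ s) ∧ MonotoneOn ψ (Set.Ici 0) ∧
    (∀ s : ℝ, 0 ≤ s → ContinuousWithinAt ψ (Set.Ici s) s) ∧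
    ψ 0 = 0 ∧ (∀ s : ℝ, 0 < s → 0 < ψ s) ∧
    Tendsto ψ atTop atTop ∧
    (∀ t : ℝ, 0 ≤ t → φ t = ∫ s in (0:ℝ)..t, ψ s)

/-- The complementary Young function `φ*(t) = sup_{s ≥ 0} (s t − φ s)`. -/
def conjYoung (φ : ℝ → ℝ) (t : ℝ) : ℝ :=
  sSup {y : ℝ | ∃ s : ℝ, 0 ≤ s ∧ y = s * t - φ s}

/-- The measure `μₙ(M) = ∫_M |x| dx`. -/
def mun {n : ℕ} (M : Set (En n)) : ℝ≥0∞ :=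
  ∫⁻ x in M, ENNReal.ofReal ‖x‖

/-- Membership in the Orlicz space `L^φ(ℝⁿ, |x|dx)`:
`h` is measurable and `∫ φ(δ|h(x)|)|x| dx < ∞` for every `δ > 0`. -/
def MemOrlicz {n : ℕ} (φ : ℝ → ℝ) (h : En n → ℝ) : Prop :=
  Measurable h ∧ ∀ δ : ℝ, 0 < δ →
    ∫⁻ x : En n, ENNReal.ofReal (φ (δ * |h x|)) * ENNReal.ofReal ‖x‖ < ⊤

/-- The Orlicz norm
`‖h‖_φ = sup { ∫ |h g| |x| dx : g measurable, ∫ φ*(|g|)|x| dx ≤ 1 }` (valued in `[0,∞]`). -/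
def orliczNorm {n : ℕ} (φ : ℝ → ℝ) (h : En n → ℝ) : ℝ≥0∞ :=
  ⨆ g ∈ {g : En n → ℝ | Measurable g ∧
      ∫⁻ x : En n, ENNReal.ofReal (conjYoung φ |g x|) * ENNReal.ofReal ‖x‖ ≤ 1},
    ∫⁻ x : En n, ENNReal.ofReal |h x * g x| * ENNReal.ofReal ‖x‖

/-- The moment vector `m(Q) = ∫_Q x dx` of a set `Q ⊆ ℝⁿ`. -/
def momentSet {n : ℕ} (Q : Set (En n)) : En n := ∫ x in Q, x

/-- The action of an `n × n` matrix on `ℝⁿ`. -/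
def matVec {n : ℕ} (ϑ : Matrix (Fin n) (Fin n) ℝ) (x : En n) : En n :=
  Matrix.toEuclideanLin ϑ x

/-- A compact convex polytope: the convex hull of a nonempty finite set. -/
def IsPolytope {n : ℕ} (Q : Set (En n)) : Prop :=
  ∃ S : Finset (En n), S.Nonempty ∧ Q = convexHull ℝ (S : Set (En n))

/-- The space of polytopes, topologized via the Hausdorff metric on nonempty
compact subsets of `ℝⁿ`. -/
abbrev PolySp (n : ℕ) := {K : NonemptyCompacts (En n) // IsPolytope (K : Set (En n))}

/-- `Y` is a valuation on polytopes. -/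
def IsPolyValuation {n : ℕ} (Y : Set (En n) → En n) : Prop :=
  ∀ Q₁ Q₂ : Set (En n), IsPolytope Q₁ → IsPolytope Q₂ → IsPolytope (Q₁ ∪ Q₂) →
    IsPolytope (Q₁ ∩ Q₂) → Y Q₁ + Y Q₂ = Y (Q₁ ∪ Q₂) + Y (Q₁ ∩ Q₂)

/-- `Y` is `SL(n)` covariant on polytopes: `Y(ϑ Q) = ϑ (Y Q)` for `det ϑ = 1`. -/
def IsPolySLCovariant {n : ℕ} (Y : Set (En n) → En n) : Prop :=
  ∀ Q : Set (En n), IsPolytope Q → ∀ ϑ : Matrix (Fin n) (Fin n) ℝ, ϑ.det = 1 →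
    Y (matVec ϑ '' Q) = matVec ϑ (Y Q)

/-- `Ψ` is a valuation on `L^φ(ℝⁿ, |x|dx)`. -/
def IsOrliczValuation {n : ℕ} (φ : ℝ → ℝ) (Ψ : (En n → ℝ) → En n) : Prop :=
  ∀ h₁ h₂ : En n → ℝ, MemOrlicz φ h₁ → MemOrlicz φ h₂ →
    Ψ (fun x => max (h₁ x) (h₂ x)) + Ψ (fun x => min (h₁ x) (h₂ x)) = Ψ h₁ + Ψ h₂

/-- `Ψ` is `SL(n)` covariant: `Ψ(h ∘ ϑ⁻¹) = ϑ (Ψ h)` for `det ϑ = 1`. -/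
def IsOrliczSLCovariant {n : ℕ} (φ : ℝ → ℝ) (Ψ : (En n → ℝ) → En n) : Prop :=
  ∀ h : En n → ℝ, MemOrlicz φ h → ∀ ϑ : Matrix (Fin n) (Fin n) ℝ, ϑ.det = 1 →
    Ψ (fun x => h (matVec ϑ⁻¹ x)) = matVec ϑ (Ψ h)

/-- `Ψ` is continuous: `Ψ(h_k) → Ψ(h)` whenever `‖h_k − h‖_φ → 0`. -/
def OrliczContinuous {n : ℕ} (φ : ℝ → ℝ) (Ψ : (En n → ℝ) → En n) : Prop :=
  ∀ (hk : ℕ → En n → ℝ) (h : En n → ℝ), (∀ k, MemOrlicz φ (hk k)) → MemOrlicz φ h →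
    Tendsto (fun k => orliczNorm φ (fun x => hk k x - h x)) atTop (𝓝 0) →
    Tendsto (fun k => Ψ (hk k)) atTop (𝓝 (Ψ h))

/-- `Ψ` identifies functions that agree almost everywhere. -/
def RespectsAE {n : ℕ} (φ : ℝ → ℝ) (Ψ : (En n → ℝ) → En n) : Prop :=
  ∀ h₁ h₂ : En n → ℝ, MemOrlicz φ h₁ → MemOrlicz φ h₂ →
    (∀ᵐ x : En n, h₁ x = h₂ x) → Ψ h₁ = Ψ h₂

/-- The `Δ₂` condition: `φ(2t) ≤ C φ(t)` for all `t ≥ T`. -/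
def SatisfiesDelta2 (φ : ℝ → ℝ) : Prop :=
  ∃ T C : ℝ, 0 ≤ T ∧ 0 < C ∧ ∀ t : ℝ, T ≤ t → φ (2 * t) ≤ C * φ t

/-- A closed cube in `ℝⁿ`: `{x : cᵢ ≤ xᵢ ≤ dᵢ}` with all side lengths equal. -/
def IsClosedCube {n : ℕ} (C : Set (En n)) : Prop :=
  ∃ c d : Fin n → ℝ, (∃ L : ℝ, 0 ≤ L ∧ ∀ i, d i - c i = L) ∧
    C = {x : En n | ∀ i, c i ≤ x i ∧ x i ≤ d i}

/-!
Fix `α`. Continuity makes `M ↦ Ψ(α χ_M)` a countably additive set function on bounded sets that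
vanishes on null sets, so it has a locally integrable density `f : ℝⁿ → ℝⁿ`, and covariance says
`f (g x) = g (f x)` for almost every `x`, for each `g ∈ SL(n)`. The exceptional null set depends on
`g`, but the value of `f` at a Lebesgue point does not depend on the representative of `f`, and `g`
carries Lebesgue values at `x` to Lebesgue values at `g x` with no exceptional set. Fixing one
Lebesgue point `x₀ ≠ 0`, the value there is fixed by the stabilizer of `x₀` in `SL(n)`, which fixes
only the multiples of `x₀`; so it is `c x₀`, and transitivity of `SL(n)` on nonzero vectors gives
`f x = c x` at every nonzero Lebesgue point. Hence `Ψ(α χ_M) = c m(M)` with `c = c(α)`, and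
continuity of `c` follows by testing on a compact set with `m(M) ≠ 0`.
-/

section SpecialLinearAction

open Module

variable {K V : Type*} [Field K] [AddCommGroup V] [Module K V]

theorem exists_specialLinearGroup_smul_eq_add {f : Dual K V} {v : V} (h : f v = 0) :
    ∃ g : SpecialLinearGroup K V, ∀ x, g • x = x + f x • v :=
  ⟨⟨LinearEquiv.transvection h, LinearEquiv.transvection.det_eq_one h⟩, fun _ => rfl⟩

theorem exists_specialLinearGroup_smul_eq_of_linearIndependent {x y : V}
    (h : LinearIndependent K ![x, y]) : ∃ g : SpecialLinearGroup K V, g • x = y := by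
  obtain ⟨f, hf⟩ := exists_dual_forall_apply_eq_one (linearIndepOn_univ_iff.2 h)
  have hx : f x = 1 := hf 0 (mem_univ _)
  have hy : f y = 1 := hf 1 (mem_univ _)
  obtain ⟨g, hg⟩ := exists_specialLinearGroup_smul_eq_add (f := f) (v := y - x) (by simp [hx, hy])
  exact ⟨g, by simp [hg, hx]⟩

theorem exists_specialLinearGroup_smul_eq (hV : 1 < finrank K V) {x y : V} (hx : x ≠ 0)
    (hy : y ≠ 0) : ∃ g : SpecialLinearGroup K V, g • x = y := by
  by_cases hxy : LinearIndependent K ![x, y]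
  · exact exists_specialLinearGroup_smul_eq_of_linearIndependent hxy
  obtain ⟨a, rfl⟩ : ∃ a : K, a • x = y := by
    simpa only [LinearIndependent.pair_iff' hx, not_forall, not_not] using hxy
  obtain ⟨z, hxz⟩ := exists_linearIndependent_pair_of_one_lt_finrank hV hx
  have hzx : LinearIndependent K ![z, a • x] := by
    rw [LinearIndependent.pair_symm_iff, ← one_smul K z,
      LinearIndependent.pair_smul_smul_iff (left_ne_zero_of_smul hy).isUnit isUnit_one]
    exact hxz
  obtain ⟨g, rfl⟩ := exists_specialLinearGroup_smul_eq_of_linearIndependent hxz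
  obtain ⟨g', hg'⟩ := exists_specialLinearGroup_smul_eq_of_linearIndependent hzx
  exact ⟨g' * g, by rw [mul_smul, hg']⟩

theorem eq_zero_of_forall_specialLinearGroup_smul_eq (hV : 1 < finrank K V) {v : V}
    (h : ∀ g : SpecialLinearGroup K V, g • v = v) : v = 0 := by
  by_contra hv
  obtain ⟨w, hvw⟩ := exists_linearIndependent_pair_of_one_lt_finrank hV hv
  obtain ⟨g, hg⟩ := exists_specialLinearGroup_smul_eq_of_linearIndependent hvw
  exact (LinearIndependent.pair_iff' hv).1 hvw 1 (by rw [one_smul, ← hg, h])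

theorem exists_smul_eq_of_forall_stabilizer_smul_eq {x v : V} (hx : x ≠ 0)
    (h : ∀ g : SpecialLinearGroup K V, g • x = x → g • v = v) : ∃ c : K, c • x = v := by
  rw [← Submodule.mem_span_singleton]
  by_contra hv
  obtain ⟨f, hfv, hf⟩ := Submodule.exists_le_ker_of_notMem hv
  have hfx : f x = 0 := hf (Submodule.mem_span_singleton_self x)
  obtain ⟨g, hg⟩ := exists_specialLinearGroup_smul_eq_add hfx
  have hgv : f v • x = 0 := by simpa [hg] using h g (by simp [hg, hfx])
  exact (smul_ne_zero hfv hx) hgv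

end SpecialLinearAction

section HaarMeasure

open Metric Module
open scoped Pointwise

variable {E : Type*} [NormedAddCommGroup E] [NormedSpace ℝ E] [FiniteDimensional ℝ E]

instance : ContinuousConstSMul (SpecialLinearGroup ℝ E) E :=
  ⟨fun g => g.toLinearEquiv.toLinearMap.continuous_of_finiteDimensional⟩

theorem exists_forall_norm_specialLinearGroup_smul_le (g : SpecialLinearGroup ℝ E) :
    ∃ C : ℝ, 0 < C ∧ ∀ x : E, ‖g • x‖ ≤ C * ‖x‖ :=
  g.toLinearEquiv.toLinearMap.toContinuousLinearMap.bound

theorem exists_forall_closedBall_specialLinearGroup_smul_subset (g : SpecialLinearGroup ℝ E) :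
    ∃ C : ℝ, 0 < C ∧ ∀ (x : E) (r : ℝ), closedBall (g • x) r ⊆ g • closedBall x (C * r) := by
  obtain ⟨C, hC, hbound⟩ := exists_forall_norm_specialLinearGroup_smul_le g⁻¹
  refine ⟨C, hC, fun x r y hy => ?_⟩
  rw [mem_smul_set_iff_inv_smul_mem, mem_closedBall_iff_norm]
  calc ‖g⁻¹ • y - x‖ = ‖g⁻¹ • (y - g • x)‖ := by rw [smul_sub, inv_smul_smul]
    _ ≤ C * ‖y - g • x‖ := hbound _
    _ ≤ C * r := by gcongr; exact mem_closedBall_iff_norm.1 hy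

variable [MeasurableSpace E] [BorelSpace E] {μ : Measure E} [μ.IsAddHaarMeasure]

instance : SMulInvariantMeasure (SpecialLinearGroup ℝ E) E μ := by
  refine ⟨fun g s _ => ?_⟩
  have hdet : LinearMap.det (g.toLinearEquiv : E →ₗ[ℝ] E) = 1 := by simpa using g.det_eq_one
  calc μ ((g.toLinearEquiv : E →ₗ[ℝ] E) ⁻¹' s)
      = ENNReal.ofReal |(LinearMap.det (g.toLinearEquiv : E →ₗ[ℝ] E))⁻¹| * μ s :=
        Measure.addHaar_preimage_linearMap μ (by rw [hdet]; exact one_ne_zero) s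
    _ = μ s := by rw [hdet, inv_one, abs_one, ENNReal.ofReal_one, one_mul]

theorem measureReal_closedBall_mul (x y : E) {C r : ℝ} (hC : 0 ≤ C) (hr : 0 ≤ r) :
    μ.real (closedBall x (C * r)) = C ^ finrank ℝ E * μ.real (closedBall y r) := by
  rw [Measure.addHaar_real_closedBall μ x (mul_nonneg hC hr),
    Measure.addHaar_real_closedBall μ y hr, mul_pow, mul_assoc]

end HaarMeasure

section LebesgueValue

open Metric

variable {X F : Type*} [PseudoMetricSpace X] [MeasurableSpace X] [NormedAddCommGroup F]
  {μ : Measure X} {f : X → F}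

/-- `v` is the value of `f` at `x` in the sense of Lebesgue points: the mean of `‖f - v‖` over the
balls around `x` tends to `0`. Unlike `f x`, it depends only on the almost everywhere class. -/
def IsLebesgueValue (μ : Measure X) (f : X → F) (x : X) (v : F) : Prop :=
  Tendsto (fun r => ⨍ y in closedBall x r, ‖f y - v‖ ∂μ) (𝓝[>] 0) (𝓝 0)

theorem ae_isLebesgueValue [SecondCountableTopology X] [BorelSpace X] [IsLocallyFiniteMeasure μ]
    [IsUnifLocDoublingMeasure μ] (hf : LocallyIntegrable f μ) :
    ∀ᵐ x ∂μ, IsLebesgueValue μ f x (f x) := by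
  filter_upwards [IsUnifLocDoublingMeasure.ae_tendsto_average_norm_sub μ hf 1] with x hx
  exact hx (fun _ => x) id tendsto_id (eventually_nhdsWithin_of_forall fun r hr =>
    mem_closedBall_self (by simpa using hr.le))

variable [IsFiniteMeasureOnCompacts μ]

theorem integrableOn_norm_sub_const_of_isCompact (hf : LocallyIntegrable f μ) (v : F) {K : Set X}
    (hK : IsCompact K) : IntegrableOn (fun y => ‖f y - v‖) K μ :=
  ((hf.integrableOn_isCompact hK).sub (integrableOn_const hK.measure_lt_top.ne)).norm

theorem IsLebesgueValue.unique [ProperSpace X] [μ.IsOpenPosMeasure] (hf : LocallyIntegrable f μ)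
    {x : X} {v w : F} (hv : IsLebesgueValue μ f x v) (hw : IsLebesgueValue μ f x w) : v = w := by
  have hle : ∀ᶠ r in 𝓝[>] (0 : ℝ), ‖v - w‖ ≤
      (⨍ y in closedBall x r, ‖f y - v‖ ∂μ) + ⨍ y in closedBall x r, ‖f y - w‖ ∂μ := by
    filter_upwards [self_mem_nhdsWithin] with r (hr : 0 < r)
    have hfv := integrableOn_norm_sub_const_of_isCompact hf v (isCompact_closedBall x r)
    have hfw := integrableOn_norm_sub_const_of_isCompact hf w (isCompact_closedBall x r)
    have hball : 0 < μ.real (closedBall x r) :=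
      ENNReal.toReal_pos (measure_closedBall_pos μ x hr).ne' measure_closedBall_lt_top.ne
    rw [setAverage_eq, setAverage_eq, ← smul_add, smul_eq_mul, le_inv_mul_iff₀ hball]
    calc μ.real (closedBall x r) * ‖v - w‖ = ∫ _ in closedBall x r, ‖v - w‖ ∂μ := by
          rw [setIntegral_const, smul_eq_mul]
      _ ≤ ∫ y in closedBall x r, (‖f y - v‖ + ‖f y - w‖) ∂μ :=
          setIntegral_mono (integrableOn_const measure_closedBall_lt_top.ne) (hfv.add hfw)
            fun y => norm_sub_rev (f y) v ▸ norm_sub_le_norm_sub_add_norm_sub v (f y) w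
      _ = (∫ y in closedBall x r, ‖f y - v‖ ∂μ) + ∫ y in closedBall x r, ‖f y - w‖ ∂μ :=
          integral_add hfv hfw
  have hlim := ge_of_tendsto (hv.add hw) hle
  rwa [add_zero, norm_le_zero_iff, sub_eq_zero] at hlim

end LebesgueValue

section EquivariantField

open Metric Module
open scoped Pointwise

variable {E : Type*} [NormedAddCommGroup E] [NormedSpace ℝ E] [FiniteDimensional ℝ E]
  [MeasurableSpace E] [BorelSpace E] {μ : Measure E} [μ.IsAddHaarMeasure]

variable {f : E → E} {g : SpecialLinearGroup ℝ E}

theorem setIntegral_smul_closedBall_norm_sub_le (hf : LocallyIntegrable f μ)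
    (hfg : ∀ᵐ x ∂μ, f (g • x) = g • f x) {L : ℝ} (hL : ∀ x : E, ‖g • x‖ ≤ L * ‖x‖)
    (v x : E) (r : ℝ) :
    ∫ y in g • closedBall x r, ‖f y - g • v‖ ∂μ ≤ L * ∫ y in closedBall x r, ‖f y - v‖ ∂μ := by
  have hint := integrableOn_norm_sub_const_of_isCompact hf v (isCompact_closedBall x r)
  have hcongr : ∀ᵐ y ∂μ.restrict (closedBall x r),
      ‖f (g • y) - g • v‖ ≤ L * ‖f y - v‖ := by
    filter_upwards [ae_restrict_of_ae hfg] with y hy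
    rw [hy, ← smul_sub]
    exact hL _
  calc ∫ y in g • closedBall x r, ‖f y - g • v‖ ∂μ
      = ∫ y in closedBall x r, ‖f (g • y) - g • v‖ ∂μ :=
        (measurePreserving_smul g μ).setIntegral_image_emb (measurableEmbedding_const_smul g) _ _
    _ ≤ ∫ y in closedBall x r, L * ‖f y - v‖ ∂μ :=
        integral_mono_of_nonneg (.of_forall fun _ => norm_nonneg _) (hint.const_mul L) hcongr
    _ = L * ∫ y in closedBall x r, ‖f y - v‖ ∂μ := integral_const_mul _ _

theorem IsLebesgueValue.smul (hf : LocallyIntegrable f μ) (hfg : ∀ᵐ x ∂μ, f (g • x) = g • f x)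
    {x v : E} (h : IsLebesgueValue μ f x v) : IsLebesgueValue μ f (g • x) (g • v) := by
  obtain ⟨L, hL, hgL⟩ := exists_forall_norm_specialLinearGroup_smul_le g
  obtain ⟨C, hC, hball⟩ := exists_forall_closedBall_specialLinearGroup_smul_subset g
  have hle : ∀ᶠ r in 𝓝[>] (0 : ℝ), ⨍ y in closedBall (g • x) r, ‖f y - g • v‖ ∂μ ≤
      C ^ finrank ℝ E * L * ⨍ y in closedBall x (C * r), ‖f y - v‖ ∂μ := by
    filter_upwards [self_mem_nhdsWithin] with r (hr : 0 < r)
    have hint : IntegrableOn (fun y => ‖f y - g • v‖) (g • closedBall x (C * r)) μ :=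
      integrableOn_norm_sub_const_of_isCompact hf _ ((isCompact_closedBall x _).smul g)
    have hmono : ∫ y in closedBall (g • x) r, ‖f y - g • v‖ ∂μ ≤
        L * ∫ y in closedBall x (C * r), ‖f y - v‖ ∂μ :=
      (setIntegral_mono_set hint (.of_forall fun _ => norm_nonneg _) (hball x r).eventuallyLE).trans
        (setIntegral_smul_closedBall_norm_sub_le hf hfg hgL v x _)
    rw [setAverage_eq, setAverage_eq, measureReal_closedBall_mul x (g • x) hC.le hr.le,
      smul_eq_mul, smul_eq_mul]
    calc (μ.real (closedBall (g • x) r))⁻¹ * ∫ y in closedBall (g • x) r, ‖f y - g • v‖ ∂μ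
        ≤ (μ.real (closedBall (g • x) r))⁻¹ * (L * ∫ y in closedBall x (C * r), ‖f y - v‖ ∂μ) := by
          gcongr
      _ = _ := by field_simp
  have hscale : Tendsto (fun r => C * r) (𝓝[>] 0) (𝓝[>] (0 : ℝ)) := by
    simpa using TendstoNhdsWithinIoi.const_mul hC (tendsto_id (x := 𝓝[>] (0 : ℝ)))
  refine squeeze_zero' (.of_forall fun r => integral_nonneg fun _ => norm_nonneg _) hle ?_
  simpa using (h.comp hscale).const_mul (C ^ finrank ℝ E * L)

theorem exists_ae_eq_const_smul_of_forall_ae_smul_eq {f : E → E} (hE : 1 < finrank ℝ E)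
    (hf : LocallyIntegrable f μ)
    (hfg : ∀ g : SpecialLinearGroup ℝ E, ∀ᵐ x ∂μ, f (g • x) = g • f x) :
    ∃ c : ℝ, ∀ᵐ x ∂μ, f x = c • x := by
  have : Nontrivial E := nontrivial_of_finrank_pos (one_pos.trans hE)
  have hgood : ∀ᵐ x ∂μ, x ≠ 0 ∧ IsLebesgueValue μ f x (f x) :=
    (Measure.ae_ne μ 0).and (ae_isLebesgueValue hf)
  obtain ⟨x₀, hx₀, hfx₀⟩ := hgood.exists
  obtain ⟨c, hc⟩ : ∃ c : ℝ, c • x₀ = f x₀ :=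
    exists_smul_eq_of_forall_stabilizer_smul_eq hx₀ fun g hg =>
      (hg ▸ hfx₀.smul hf (hfg g)).unique hf hfx₀
  refine ⟨c, hgood.mono fun x ⟨hx, hfx⟩ => ?_⟩
  obtain ⟨g, rfl⟩ := exists_specialLinearGroup_smul_eq hE hx₀ hx
  rw [hfx.unique hf (hfx₀.smul hf (hfg g)), ← hc, smul_comm]

end EquivariantField

section Density

open Bornology Function

variable {E : Type*} [SeminormedAddCommGroup E]

/-- The spherical shell `k ≤ ‖x‖ < k + 1`. The shells cut a space into countably many bounded
pieces. -/
def shell (E : Type*) [SeminormedAddCommGroup E] (k : ℕ) : Set E := {x | ⌊‖x‖⌋₊ = k}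

theorem isBounded_shell (k : ℕ) : IsBounded (shell E k) :=
  isBounded_iff_forall_norm_le.2 ⟨k + 1, fun x (hx : ⌊‖x‖⌋₊ = k) =>
    hx ▸ (Nat.lt_floor_add_one ‖x‖).le⟩

variable [MeasurableSpace E]

theorem measurableSet_shell [OpensMeasurableSpace E] (k : ℕ) : MeasurableSet (shell E k) :=
  measurableSet_eq_fun (Nat.measurable_floor.comp continuous_norm.measurable) measurable_const

variable {μ : Measure E}

/-- A charge on the bounded measurable sets that is absolutely continuous with respect to `μ`:
countably additive whenever the union is bounded, and zero on bounded `μ`-null sets. The value on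
other sets is unconstrained. -/
structure IsAbsolutelyContinuousCharge {F : Type*} [AddCommMonoid F] [TopologicalSpace F]
    (μ : Measure E) (ν : Set E → F) : Prop where
  hasSum_iUnion : ∀ ⦃A : ℕ → Set E⦄, (∀ i, MeasurableSet (A i)) → Pairwise (Disjoint on A) →
    IsBounded (⋃ i, A i) → HasSum (fun i => ν (A i)) (ν (⋃ i, A i))
  eq_zero_of_null : ∀ ⦃M : Set E⦄, MeasurableSet M → IsBounded M → μ M = 0 → ν M = 0

namespace IsAbsolutelyContinuousCharge

theorem map {F G : Type*} [AddCommMonoid F] [TopologicalSpace F] [AddCommMonoid G]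
    [TopologicalSpace G] {ν : Set E → F} (hν : IsAbsolutelyContinuousCharge μ ν) (L : F →+ G)
    (hL : Continuous L) : IsAbsolutelyContinuousCharge μ fun M => L (ν M) where
  hasSum_iUnion _ hA hd hb := (hν.hasSum_iUnion hA hd hb).map L hL
  eq_zero_of_null _ hM hb h0 := by rw [hν.eq_zero_of_null hM hb h0, map_zero]

/-- The signed measure `A ↦ ν (A ∩ D)` obtained by restricting a charge to a bounded set `D`. -/
def restrictSigned {ν : Set E → ℝ} (hν : IsAbsolutelyContinuousCharge μ ν) {D : Set E}
    (hD : MeasurableSet D) (hDb : IsBounded D) : SignedMeasure E := by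
  classical exact
  { measureOf' := fun A => if MeasurableSet A then ν (A ∩ D) else 0
    empty' := by
      simpa using hν.eq_zero_of_null MeasurableSet.empty isBounded_empty measure_empty
    not_measurable' := fun A hA => if_neg hA
    m_iUnion' := fun A hA hd => by
      simp only [hA, MeasurableSet.iUnion hA, if_true, iUnion_inter]
      exact hν.hasSum_iUnion (fun i => (hA i).inter hD)
        (fun i j hij => (hd hij).mono inter_subset_left inter_subset_left)
        (hDb.subset (iUnion_subset fun i => inter_subset_right)) }

theorem restrictSigned_apply {ν : Set E → ℝ} (hν : IsAbsolutelyContinuousCharge μ ν) {D A : Set E}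
    (hD : MeasurableSet D) (hDb : IsBounded D) (hA : MeasurableSet A) :
    hν.restrictSigned hD hDb A = ν (A ∩ D) :=
  if_pos hA

theorem exists_integrable_eq_setIntegral [SigmaFinite μ] {ν : Set E → ℝ}
    (hν : IsAbsolutelyContinuousCharge μ ν) {D : Set E} (hD : MeasurableSet D)
    (hDb : IsBounded D) :
    ∃ f : E → ℝ, Integrable f μ ∧ ∀ M ⊆ D, MeasurableSet M → ν M = ∫ x in M, f x ∂μ := by
  set s := hν.restrictSigned hD hDb
  have hac : s ≪ᵥ μ.toENNRealVectorMeasure := .mk fun A hA h0 => by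
    rw [Measure.toENNRealVectorMeasure_apply_measurable hA] at h0
    rw [hν.restrictSigned_apply hD hDb hA]
    exact hν.eq_zero_of_null (hA.inter hD) (hDb.subset inter_subset_right)
      (measure_mono_null inter_subset_left h0)
  refine ⟨s.rnDeriv μ, SignedMeasure.integrable_rnDeriv s μ, fun M hMD hM => ?_⟩
  rw [← withDensityᵥ_apply (SignedMeasure.integrable_rnDeriv s μ) hM,
    SignedMeasure.withDensityᵥ_rnDeriv_eq s μ hac, hν.restrictSigned_apply hD hDb hM,
    inter_eq_left.2 hMD]

variable [OpensMeasurableSpace E]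

theorem exists_density_real [SigmaFinite μ] {ν : Set E → ℝ}
    (hν : IsAbsolutelyContinuousCharge μ ν) :
    ∃ f : E → ℝ, ∀ M, MeasurableSet M → IsBounded M →
      IntegrableOn f M μ ∧ ν M = ∫ x in M, f x ∂μ := by
  choose g hg hνg using fun k : ℕ =>
    hν.exists_integrable_eq_setIntegral (measurableSet_shell k) (isBounded_shell k)
  set f : E → ℝ := fun x => g ⌊‖x‖⌋₊ x
  refine ⟨f, fun M hM hMb => ?_⟩
  have hmeas (k : ℕ) : MeasurableSet (M ∩ shell E k) := hM.inter (measurableSet_shell k)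
  have hdisj : Pairwise (Disjoint on fun k => M ∩ shell E k) := fun i j hij =>
    Set.disjoint_left.2 fun x hi hj => hij (hi.2.symm.trans hj.2)
  have hfg (k : ℕ) : EqOn (g k) f (M ∩ shell E k) := fun x hx => by simp only [f, hx.2.out]
  have hcover : ⋃ k, M ∩ shell E k = M := by
    rw [← inter_iUnion, inter_eq_left]; exact fun x _ => mem_iUnion.2 ⟨_, rfl⟩
  have hint : IntegrableOn f M μ := by
    obtain ⟨R, hR⟩ := hMb.exists_norm_le
    have hsub : M ⊆ ⋃ k ∈ Finset.range (⌊R⌋₊ + 1), M ∩ shell E k := fun x hx =>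
      mem_iUnion₂.2 ⟨⌊‖x‖⌋₊, Finset.mem_range_succ_iff.2 (Nat.floor_le_floor (hR x hx)), hx, rfl⟩
    refine IntegrableOn.mono_set (integrableOn_finset_iUnion.2 fun k _ => ?_) hsub
    exact (hg k).integrableOn.congr_fun (hfg k) (hmeas k)
  refine ⟨hint, ?_⟩
  have hsum := hν.hasSum_iUnion hmeas hdisj (hcover.symm ▸ hMb)
  have hsum' := hasSum_integral_iUnion hmeas hdisj (hcover.symm ▸ hint)
  rw [hcover] at hsum hsum'
  have hterm : (fun k => ν (M ∩ shell E k)) = fun k => ∫ x in M ∩ shell E k, f x ∂μ :=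
    funext fun k => by
      rw [hνg k _ inter_subset_right (hmeas k), setIntegral_congr_fun (hmeas k) (hfg k)]
  rw [hterm] at hsum
  exact hsum.unique hsum'

theorem exists_density [SigmaFinite μ] {F : Type*} [NormedAddCommGroup F] [NormedSpace ℝ F]
    [FiniteDimensional ℝ F] {ν : Set E → F} (hν : IsAbsolutelyContinuousCharge μ ν) :
    ∃ f : E → F, ∀ M, MeasurableSet M → IsBounded M →
      IntegrableOn f M μ ∧ ν M = ∫ x in M, f x ∂μ := by
  set b := Module.finBasis ℝ F
  choose f hf using fun i => (hν.map (b.coord i).toAddMonoidHom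
    (b.coord i).continuous_of_finiteDimensional).exists_density_real
  refine ⟨fun x => ∑ i, f i x • b i, fun M hM hMb => ?_⟩
  have hint (i) : IntegrableOn (fun x => f i x • b i) M μ := (hf i M hM hMb).1.smul_const (b i)
  refine ⟨integrable_finsetSum _ fun i _ => hint i, ?_⟩
  calc ν M = ∑ i, b.coord i (ν M) • b i := (b.sum_repr (ν M)).symm
    _ = ∑ i, ∫ x in M, f i x • b i ∂μ := by
      simp only [integral_smul_const, ← (hf _ M hM hMb).2]; rfl
    _ = ∫ x in M, ∑ i, f i x • b i ∂μ := (integral_finsetSum _ fun i _ => hint i).symm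

end IsAbsolutelyContinuousCharge

end Density

section EquivariantCharge

open Bornology Metric Module
open scoped Pointwise

variable {E : Type*} [NormedAddCommGroup E] [NormedSpace ℝ E] [FiniteDimensional ℝ E]
  [MeasurableSpace E] [BorelSpace E] {μ : Measure E} [μ.IsAddHaarMeasure]

theorem ae_smul_eq_of_forall_setIntegral_eq {f : E → E} (hf : LocallyIntegrable f μ)
    {g : SpecialLinearGroup ℝ E}
    (hfg : ∀ K : Set E, IsCompact K → ∫ x in g • K, f x ∂μ = g • ∫ x in K, f x ∂μ) :
    ∀ᵐ x ∂μ, f (g • x) = g • f x := by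
  have hmp : MeasurePreserving (g • · : E → E) μ μ := measurePreserving_smul g μ
  have hemb : MeasurableEmbedding (g • · : E → E) := measurableEmbedding_const_smul g
  set G : E →L[ℝ] E := g.toLinearEquiv.toLinearMap.toContinuousLinearMap
  have hfK {K : Set E} (hK : IsCompact K) : IntegrableOn (fun x => f (g • x)) K μ :=
    (hmp.integrableOn_image hemb).1 (hf.integrableOn_isCompact (hK.smul g))
  have hGK {K : Set E} (hK : IsCompact K) : IntegrableOn (fun x => G (f x)) K μ :=
    G.integrable_comp (hf.integrableOn_isCompact hK)
  have hloc : LocallyIntegrable (fun x => f (g • x) - G (f x)) μ :=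
    locallyIntegrable_iff.2 fun K hK => (hfK hK).sub (hGK hK)
  have hzero (K : Set E) (hK : IsCompact K) : ∫ x in K, (f (g • x) - G (f x)) ∂μ = 0 := by
    rw [integral_sub (hfK hK) (hGK hK), ← hmp.setIntegral_image_emb hemb, image_smul, hfg K hK,
      G.integral_comp_comm (hf.integrableOn_isCompact hK)]
    exact sub_self _
  filter_upwards [ae_eq_zero_of_forall_setIntegral_isCompact_eq_zero' hloc hzero] with x hx
  exact sub_eq_zero.1 hx

theorem IsAbsolutelyContinuousCharge.exists_eq_const_smul_setIntegral (hE : 1 < finrank ℝ E)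
    {ν : Set E → E} (hν : IsAbsolutelyContinuousCharge μ ν)
    (hνg : ∀ (g : SpecialLinearGroup ℝ E) (M : Set E), MeasurableSet M → IsBounded M →
      ν (g • M) = g • ν M) :
    ∃ c : ℝ, ∀ M, MeasurableSet M → IsBounded M → ν M = c • ∫ x in M, x ∂μ := by
  obtain ⟨f, hf⟩ := hν.exists_density
  have hloc : LocallyIntegrable f μ :=
    locallyIntegrable_iff.2 fun K hK => (hf K hK.measurableSet hK.isBounded).1
  obtain ⟨c, hc⟩ := exists_ae_eq_const_smul_of_forall_ae_smul_eq hE hloc fun g =>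
    ae_smul_eq_of_forall_setIntegral_eq hloc fun K hK => by
      rw [← (hf _ (hK.smul g).measurableSet (hK.smul g).isBounded).2,
        hνg g K hK.measurableSet hK.isBounded, (hf K hK.measurableSet hK.isBounded).2]
  refine ⟨c, fun M hM hMb => ?_⟩
  rw [(hf M hM hMb).2, integral_congr_ae (ae_restrict_of_ae hc), integral_smul]

theorem exists_isCompact_setIntegral_ne_zero [Nontrivial E] :
    ∃ K : Set E, IsCompact K ∧ ∫ x in K, x ∂μ ≠ 0 := by
  by_contra! h
  have hzero := ae_eq_zero_of_forall_setIntegral_isCompact_eq_zero'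
    (continuous_id.locallyIntegrable (μ := μ)) h
  obtain ⟨x, hx, hx'⟩ := (hzero.and (Measure.ae_ne μ 0)).exists
  exact hx' hx

end EquivariantCharge

section YoungFunction

variable {φ : ℝ → ℝ}

namespace IsYoung

theorem map_zero (hφ : IsYoung φ) : φ 0 = 0 := by
  obtain ⟨ψ, -, -, -, -, -, -, hint⟩ := hφ
  rw [hint 0 le_rfl, intervalIntegral.integral_same]

theorem nonneg (hφ : IsYoung φ) {s : ℝ} (hs : 0 ≤ s) : 0 ≤ φ s := by
  obtain ⟨ψ, hψ, -, -, -, -, -, hint⟩ := hφ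
  rw [hint s hs]
  exact intervalIntegral.integral_nonneg hs fun x hx => hψ x hx.1

theorem exists_forall_mul_sub_le (hφ : IsYoung φ) (t : ℝ) :
    ∃ T, 0 ≤ T ∧ ∀ s, T ≤ s → (s - T) * t ≤ φ s - φ T := by
  obtain ⟨ψ, -, hmono, -, -, -, htop, hint⟩ := hφ
  have hψint {a b : ℝ} (ha : 0 ≤ a) (hb : 0 ≤ b) : IntervalIntegrable ψ volume a b :=
    (hmono.mono fun x hx => (le_min ha hb).trans hx.1).intervalIntegrable
  obtain ⟨T, hT0, hT⟩ :=
    ((eventually_ge_atTop (0 : ℝ)).and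
      (eventually_forall_ge_atTop.2 (htop.eventually_ge_atTop t))).exists
  refine ⟨T, hT0, fun s hs => ?_⟩
  have hs0 : 0 ≤ s := hT0.trans hs
  calc (s - T) * t = ∫ _ in T..s, t := by rw [intervalIntegral.integral_const, smul_eq_mul]
    _ ≤ ∫ x in T..s, ψ x := intervalIntegral.integral_mono_on hs intervalIntegrable_const
        (hψint hT0 hs0) fun x hx => hT x hx.1
    _ = φ s - φ T := by
      rw [hint s hs0, hint T hT0, intervalIntegral.integral_interval_sub_left
        (hψint le_rfl hs0) (hψint le_rfl hT0)]

theorem bddAbove_conjYoung (hφ : IsYoung φ) (t : ℝ) :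
    BddAbove {y : ℝ | ∃ s : ℝ, 0 ≤ s ∧ y = s * t - φ s} := by
  obtain ⟨T, hT0, hT⟩ := hφ.exists_forall_mul_sub_le t
  refine ⟨T * |t|, ?_⟩
  rintro _ ⟨s, hs, rfl⟩
  rcases le_total s T with hsT | hTs
  · calc s * t - φ s ≤ s * t := sub_le_self _ (hφ.nonneg hs)
      _ ≤ s * |t| := by gcongr; exact le_abs_self t
      _ ≤ T * |t| := by gcongr
  · calc s * t - φ s ≤ T * t - φ T := by linarith [hT s hTs]
      _ ≤ T * t := sub_le_self _ (hφ.nonneg hT0)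
      _ ≤ T * |t| := by gcongr; exact le_abs_self t

theorem mul_le_add_conjYoung (hφ : IsYoung φ) {s : ℝ} (hs : 0 ≤ s) (t : ℝ) :
    s * t ≤ φ s + conjYoung φ t :=
  sub_le_iff_le_add'.1 (le_csSup (hφ.bddAbove_conjYoung t) ⟨s, hs, rfl⟩)

end IsYoung

end YoungFunction

section OrliczIndicator

open Bornology

variable {n : ℕ}

/-- The measure `|x|dx`; its value on a measurable set `M` is `mun M`. -/
def weightedVolume (n : ℕ) : Measure (En n) := volume.withDensity fun x => ENNReal.ofReal ‖x‖

instance : IsLocallyFiniteMeasure (weightedVolume n) :=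
  IsLocallyFiniteMeasure.withDensity_ofReal continuous_norm

theorem lintegral_mul_norm_eq_lintegral_weightedVolume {f : En n → ℝ≥0∞} (hf : Measurable f) :
    ∫⁻ x, f x * ENNReal.ofReal ‖x‖ = ∫⁻ x, f x ∂weightedVolume n := by
  rw [weightedVolume, lintegral_withDensity_eq_lintegral_mul _ (by fun_prop) hf]
  simp only [Pi.mul_apply, mul_comm]

theorem lintegral_indicator_const_mul_norm {M : Set (En n)} (hM : MeasurableSet M) (c : ℝ≥0∞) :
    ∫⁻ x, M.indicator (fun _ => c) x * ENNReal.ofReal ‖x‖ = c * weightedVolume n M := by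
  rw [lintegral_mul_norm_eq_lintegral_weightedVolume (measurable_const.indicator hM),
    lintegral_indicator_const hM]

variable {φ : ℝ → ℝ}

theorem memOrlicz_indicator_const (hφ : IsYoung φ) {M : Set (En n)} (hM : MeasurableSet M)
    (hMb : IsBounded M) (α : ℝ) : MemOrlicz φ (M.indicator fun _ => α) := by
  refine ⟨measurable_const.indicator hM, fun δ _ => ?_⟩
  have hφM (x : En n) : ENNReal.ofReal (φ (δ * |M.indicator (fun _ => α) x|)) =
      M.indicator (fun _ => ENNReal.ofReal (φ (δ * |α|))) x := by
    by_cases hx : x ∈ M <;> simp [hx, hφ.map_zero]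
  simp only [hφM]
  rw [lintegral_indicator_const_mul_norm hM]
  exact ENNReal.mul_lt_top ENNReal.ofReal_lt_top hMb.measure_lt_top

theorem memOrlicz_zero (hφ : IsYoung φ) : MemOrlicz φ fun _ : En n => 0 := by
  simpa using memOrlicz_indicator_const (n := n) hφ MeasurableSet.empty isBounded_empty 0

theorem ofReal_abs_mul_le_conjYoung (hφ : IsYoung φ) {t : ℝ} (ht : 0 < t) (α s : ℝ) :
    ENNReal.ofReal |α * s| ≤
      ENNReal.ofReal (|α| / t) * (ENNReal.ofReal (φ t) + ENNReal.ofReal (conjYoung φ |s|)) :=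
  calc ENNReal.ofReal |α * s| = ENNReal.ofReal (|α| / t * (t * |s|)) := by
        rw [abs_mul, ← mul_assoc, div_mul_cancel₀ _ ht.ne']
    _ ≤ ENNReal.ofReal (|α| / t * (φ t + conjYoung φ |s|)) := by
        gcongr; exact hφ.mul_le_add_conjYoung ht.le |s|
    _ = ENNReal.ofReal (|α| / t) * ENNReal.ofReal (φ t + conjYoung φ |s|) :=
        ENNReal.ofReal_mul (by positivity)
    _ ≤ _ := by gcongr; exact ENNReal.ofReal_add_le

theorem orliczNorm_indicator_const_le (hφ : IsYoung φ) {M : Set (En n)} (hM : MeasurableSet M)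
    (α : ℝ) {t : ℝ} (ht : 0 < t) :
    orliczNorm φ (M.indicator fun _ => α) ≤
      ENNReal.ofReal (|α| / t) * (ENNReal.ofReal (φ t) * weightedVolume n M + 1) := by
  refine iSup₂_le fun g ⟨_, hg⟩ => ?_
  have hpointwise (x : En n) : ENNReal.ofReal |M.indicator (fun _ => α) x * g x| ≤
      ENNReal.ofReal (|α| / t) * (M.indicator (fun _ => ENNReal.ofReal (φ t)) x +
        ENNReal.ofReal (conjYoung φ |g x|)) := by
    by_cases hx : x ∈ M
    · simpa only [indicator_of_mem hx] using ofReal_abs_mul_le_conjYoung hφ ht α (g x)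
    · simp [hx]
  have hmeas : Measurable fun x : En n =>
      M.indicator (fun _ => ENNReal.ofReal (φ t)) x * ENNReal.ofReal ‖x‖ :=
    (measurable_const.indicator hM).mul (by fun_prop)
  calc ∫⁻ x, ENNReal.ofReal |M.indicator (fun _ => α) x * g x| * ENNReal.ofReal ‖x‖
      ≤ ∫⁻ x, ENNReal.ofReal (|α| / t) *
          (M.indicator (fun _ => ENNReal.ofReal (φ t)) x * ENNReal.ofReal ‖x‖ +
            ENNReal.ofReal (conjYoung φ |g x|) * ENNReal.ofReal ‖x‖) := by
        refine lintegral_mono fun x => ?_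
        rw [← add_mul, ← mul_assoc]
        exact mul_le_mul_left (hpointwise x) _
    _ = ENNReal.ofReal (|α| / t) * (ENNReal.ofReal (φ t) * weightedVolume n M +
          ∫⁻ x, ENNReal.ofReal (conjYoung φ |g x|) * ENNReal.ofReal ‖x‖) := by
        rw [lintegral_const_mul' _ _ ENNReal.ofReal_ne_top, lintegral_add_left hmeas,
          lintegral_indicator_const_mul_norm hM]
    _ ≤ _ := by gcongr

variable {ι : Type*} {l : Filter ι}

theorem tendsto_orliczNorm_indicator_const (hφ : IsYoung φ) {M : Set (En n)}
    (hM : MeasurableSet M) (hMb : IsBounded M) {a : ι → ℝ} (ha : Tendsto a l (𝓝 0)) :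
    Tendsto (fun i => orliczNorm φ (M.indicator fun _ => a i)) l (𝓝 0) := by
  refine tendsto_of_tendsto_of_tendsto_of_le_of_le tendsto_const_nhds ?_ (fun _ => zero_le)
    fun i => orliczNorm_indicator_const_le hφ hM (a i) one_pos
  have hfin : ENNReal.ofReal (φ 1) * weightedVolume n M + 1 ≠ ⊤ := by
    have := hMb.measure_lt_top (μ := weightedVolume n)
    finiteness
  have hscale : Tendsto (fun i => ENNReal.ofReal (|a i| / 1)) l (𝓝 0) := by
    simpa using ENNReal.tendsto_ofReal ha.abs
  simpa using ENNReal.Tendsto.mul_const hscale (.inr hfin)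

theorem tendsto_orliczNorm_indicator_of_tendsto_weightedVolume (hφ : IsYoung φ) (α : ℝ)
    {M : ι → Set (En n)} (hM : ∀ i, MeasurableSet (M i))
    (h : Tendsto (fun i => weightedVolume n (M i)) l (𝓝 0)) :
    Tendsto (fun i => orliczNorm φ ((M i).indicator fun _ => α)) l (𝓝 0) := by
  refine ENNReal.tendsto_nhds_zero.2 fun ε hε => ?_
  -- `|α| / t` is made small first; only then is the fixed factor `φ t` absorbed by the measure.
  have hscale : Tendsto (fun t : ℝ => ENNReal.ofReal (|α| / t) * (1 + 1)) atTop (𝓝 0) := by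
    have : Tendsto (fun t : ℝ => |α| / t) atTop (𝓝 0) := tendsto_const_nhds.div_atTop tendsto_id
    simpa using ENNReal.Tendsto.mul_const (ENNReal.tendsto_ofReal this)
      (.inr (by finiteness : (1 + 1 : ℝ≥0∞) ≠ ⊤))
  obtain ⟨t, hε, ht⟩ :=
    ((ENNReal.tendsto_nhds_zero.1 hscale ε hε).and (eventually_gt_atTop 0)).exists
  have hsets : Tendsto (fun i => ENNReal.ofReal (φ t) * weightedVolume n (M i)) l (𝓝 0) := by
    simpa using ENNReal.Tendsto.const_mul h (.inr ENNReal.ofReal_ne_top)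
  filter_upwards [ENNReal.tendsto_nhds_zero.1 hsets 1 one_pos] with i hi
  calc orliczNorm φ ((M i).indicator fun _ => α)
      ≤ ENNReal.ofReal (|α| / t) * (ENNReal.ofReal (φ t) * weightedVolume n (M i) + 1) :=
        orliczNorm_indicator_const_le hφ (hM i) α ht
    _ ≤ ENNReal.ofReal (|α| / t) * (1 + 1) := by gcongr
    _ ≤ ε := hε

end OrliczIndicator

section IndicatorValuation

open Bornology Function Module
open scoped Pointwise

theorem tendsto_measure_iUnion_sdiff_biUnion_finset {X ι : Type*} [MeasurableSpace X]
    [Countable ι] {μ : Measure X} {A : ι → Set X} (hA : ∀ i, MeasurableSet (A i))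
    (hfin : μ (⋃ i, A i) ≠ ∞) :
    Tendsto (fun s : Finset ι => μ ((⋃ i, A i) \ ⋃ i ∈ s, A i)) atTop (𝓝 0) := by
  have hanti : Antitone fun s : Finset ι => (⋃ i, A i) \ ⋃ i ∈ s, A i := fun s t hst =>
    sdiff_subset_sdiff_right (biUnion_subset_biUnion_left hst)
  have hempty : ⋂ s : Finset ι, (⋃ i, A i) \ ⋃ i ∈ s, A i = ∅ := by
    rw [← sdiff_iUnion, ← iUnion_eq_iUnion_finset, sdiff_self]
  rw [← measure_empty (μ := μ), ← hempty]
  exact tendsto_measure_iInter_atTop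
    (fun s => ((MeasurableSet.iUnion hA).diff
      (s.measurableSet_biUnion fun i _ => hA i)).nullMeasurableSet)
    hanti ⟨∅, ne_top_of_le_ne_top hfin (measure_mono sdiff_subset)⟩

section Lattice

variable {X : Type*} (A B : Set X)

theorem max_indicator_const {α : ℝ} (hα : 0 ≤ α) :
    (fun x => max (A.indicator (fun _ => α) x) (B.indicator (fun _ => α) x)) =
      (A ∪ B).indicator fun _ => α := by
  ext x
  by_cases hA : x ∈ A <;> by_cases hB : x ∈ B <;> simp [hA, hB, hα]

theorem min_indicator_const {α : ℝ} (hα : 0 ≤ α) :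
    (fun x => min (A.indicator (fun _ => α) x) (B.indicator (fun _ => α) x)) =
      (A ∩ B).indicator fun _ => α := by
  ext x
  by_cases hA : x ∈ A <;> by_cases hB : x ∈ B <;> simp [hA, hB, hα]

theorem max_indicator_const_of_nonpos {α : ℝ} (hα : α ≤ 0) :
    (fun x => max (A.indicator (fun _ => α) x) (B.indicator (fun _ => α) x)) =
      (A ∩ B).indicator fun _ => α := by
  ext x
  by_cases hA : x ∈ A <;> by_cases hB : x ∈ B <;> simp [hA, hB, hα]

theorem min_indicator_const_of_nonpos {α : ℝ} (hα : α ≤ 0) :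
    (fun x => min (A.indicator (fun _ => α) x) (B.indicator (fun _ => α) x)) =
      (A ∪ B).indicator fun _ => α := by
  ext x
  by_cases hA : x ∈ A <;> by_cases hB : x ∈ B <;> simp [hA, hB, hα]

end Lattice

variable {n : ℕ} {φ : ℝ → ℝ} {Ψ : (En n → ℝ) → En n}

theorem IsOrliczValuation.map_indicator_union_add_map_indicator_inter
    (hval : IsOrliczValuation φ Ψ) (hφ : IsYoung φ) (α : ℝ) {A B : Set (En n)}
    (hA : MeasurableSet A) (hAb : IsBounded A) (hB : MeasurableSet B) (hBb : IsBounded B) :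
    Ψ ((A ∪ B).indicator fun _ => α) + Ψ ((A ∩ B).indicator fun _ => α) =
      Ψ (A.indicator fun _ => α) + Ψ (B.indicator fun _ => α) := by
  have h := hval _ _ (memOrlicz_indicator_const hφ hA hAb α)
    (memOrlicz_indicator_const hφ hB hBb α)
  rcases le_total 0 α with hα | hα
  · rwa [max_indicator_const A B hα, min_indicator_const A B hα] at h
  · rwa [max_indicator_const_of_nonpos A B hα, min_indicator_const_of_nonpos A B hα,
      add_comm] at h

theorem IsOrliczValuation.sum_map_indicator (hval : IsOrliczValuation φ Ψ) (hφ : IsYoung φ)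
    (hΨ : Ψ (fun _ => 0) = 0) (α : ℝ) {ι : Type*} {A : ι → Set (En n)}
    (hA : ∀ i, MeasurableSet (A i)) (hAb : ∀ i, IsBounded (A i))
    (hd : Pairwise (Disjoint on A)) (s : Finset ι) :
    ∑ i ∈ s, Ψ ((A i).indicator fun _ => α) = Ψ ((⋃ i ∈ s, A i).indicator fun _ => α) := by
  classical
  induction s using Finset.induction_on with
  | empty => simp [hΨ]
  | insert a s ha ih =>
    have hdisj : A a ∩ ⋃ i ∈ s, A i = ∅ := by
      rw [← disjoint_iff_inter_eq_empty, disjoint_iUnion₂_right]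
      exact fun i hi => hd (ne_of_mem_of_not_mem hi ha).symm
    rw [Finset.sum_insert ha, ih, Finset.set_biUnion_insert,
      ← hval.map_indicator_union_add_map_indicator_inter hφ α (hA a) (hAb a)
        (s.measurableSet_biUnion fun i _ => hA i)
        ((isBounded_biUnion_finset s).2 fun i _ => hAb i),
      hdisj, indicator_empty, hΨ, add_zero]

theorem OrliczContinuous.tendsto {ι : Type*} {l : Filter ι} [l.IsCountablyGenerated]
    (hcont : OrliczContinuous φ Ψ) {H : ι → En n → ℝ} {h : En n → ℝ}
    (hH : ∀ i, MemOrlicz φ (H i)) (hh : MemOrlicz φ h)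
    (hlim : Tendsto (fun i => orliczNorm φ fun x => H i x - h x) l (𝓝 0)) :
    Tendsto (fun i => Ψ (H i)) l (𝓝 (Ψ h)) :=
  tendsto_of_seq_tendsto fun u hu => hcont _ _ (fun k => hH (u k)) hh (hlim.comp hu)

theorem OrliczContinuous.continuous_map_indicator (hcont : OrliczContinuous φ Ψ)
    (hφ : IsYoung φ) {M : Set (En n)} (hM : MeasurableSet M) (hMb : IsBounded M) :
    Continuous fun α => Ψ (M.indicator fun _ => α) := by
  refine continuous_iff_continuousAt.2 fun α => hcont.tendsto
    (memOrlicz_indicator_const hφ hM hMb) (memOrlicz_indicator_const hφ hM hMb α) ?_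
  have hdiff (β : ℝ) : (fun x => M.indicator (fun _ => β) x - M.indicator (fun _ => α) x) =
      M.indicator fun _ => β - α := (indicator_sub M _ _).symm
  simp only [hdiff]
  exact tendsto_orliczNorm_indicator_const hφ hM hMb
    (tendsto_sub_nhds_zero_iff.2 tendsto_id)

theorem OrliczContinuous.hasSum_map_indicator (hcont : OrliczContinuous φ Ψ)
    (hval : IsOrliczValuation φ Ψ) (hφ : IsYoung φ) (hΨ : Ψ (fun _ => 0) = 0) (α : ℝ)
    {ι : Type*} [Countable ι] {A : ι → Set (En n)} (hA : ∀ i, MeasurableSet (A i))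
    (hd : Pairwise (Disjoint on A)) (hb : IsBounded (⋃ i, A i)) :
    HasSum (fun i => Ψ ((A i).indicator fun _ => α)) (Ψ ((⋃ i, A i).indicator fun _ => α)) := by
  have hAb (i : ι) : IsBounded (A i) := hb.subset (subset_iUnion A i)
  have hsub (s : Finset ι) : ⋃ i ∈ s, A i ⊆ ⋃ i, A i := iUnion₂_subset fun i _ => subset_iUnion A i
  have hs (s : Finset ι) : MeasurableSet (⋃ i ∈ s, A i) := s.measurableSet_biUnion fun i _ => hA i
  have hdiff (s : Finset ι) : (fun x => (⋃ i ∈ s, A i).indicator (fun _ => α) x -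
      (⋃ i, A i).indicator (fun _ => α) x) =
      ((⋃ i, A i) \ ⋃ i ∈ s, A i).indicator fun _ => -α := by
    rw [indicator_neg, indicator_sdiff (hsub s)]
    exact funext fun x => (neg_sub _ _).symm
  simp only [HasSum, SummationFilter.unconditional_filter,
    hval.sum_map_indicator hφ hΨ α hA hAb hd]
  refine hcont.tendsto (fun s => memOrlicz_indicator_const hφ (hs s) (hb.subset (hsub s)) α)
    (memOrlicz_indicator_const hφ (.iUnion hA) hb α) ?_
  simp only [hdiff]
  exact tendsto_orliczNorm_indicator_of_tendsto_weightedVolume hφ (-α)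
    (fun s => (MeasurableSet.iUnion hA).diff (hs s))
    (tendsto_measure_iUnion_sdiff_biUnion_finset hA hb.measure_lt_top.ne)

theorem RespectsAE.map_indicator_of_null (hae : RespectsAE φ Ψ) (hφ : IsYoung φ)
    (hΨ : Ψ (fun _ => 0) = 0) (α : ℝ) {M : Set (En n)} (hM : MeasurableSet M)
    (hMb : IsBounded M) (h0 : volume M = 0) : Ψ (M.indicator fun _ => α) = 0 :=
  (hae _ _ (memOrlicz_indicator_const hφ hM hMb α) (memOrlicz_zero hφ)
    (indicator_meas_zero h0)).trans hΨ

theorem isAbsolutelyContinuousCharge_map_indicator (hφ : IsYoung φ) (hae : RespectsAE φ Ψ)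
    (hval : IsOrliczValuation φ Ψ) (hcont : OrliczContinuous φ Ψ) (hΨ : Ψ (fun _ => 0) = 0)
    (α : ℝ) :
    IsAbsolutelyContinuousCharge volume fun M : Set (En n) => Ψ (M.indicator fun _ => α) where
  hasSum_iUnion _ hA hd hb := hcont.hasSum_map_indicator hval hφ hΨ α hA hd hb
  eq_zero_of_null _ hM hMb h0 := hae.map_indicator_of_null hφ hΨ α hM hMb h0

theorem exists_matrix_matVec_eq_smul (g : SpecialLinearGroup ℝ (En n)) :
    ∃ ϑ : Matrix (Fin n) (Fin n) ℝ, ϑ.det = 1 ∧ (∀ x, matVec ϑ x = g • x) ∧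
      ∀ x, matVec ϑ⁻¹ x = g⁻¹ • x := by
  set ϑ := Matrix.toEuclideanLin.symm (g.toLinearEquiv : En n →ₗ[ℝ] En n)
  have hϑ : Matrix.toEuclideanLin ϑ = (g.toLinearEquiv : En n →ₗ[ℝ] En n) :=
    LinearEquiv.apply_symm_apply _ _
  have hsmul (x : En n) : matVec ϑ x = g • x := LinearMap.congr_fun hϑ x
  have hdet : ϑ.det = 1 := by
    rw [← LinearMap.det_toLpLin 2, hϑ, ← LinearEquiv.coe_det]
    simpa using g.det_eq_one
  refine ⟨ϑ, hdet, hsmul, fun x => ?_⟩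
  calc matVec ϑ⁻¹ x = matVec ϑ⁻¹ (matVec ϑ (g⁻¹ • x)) := by rw [hsmul, smul_inv_smul]
    _ = matVec (ϑ⁻¹ * ϑ) (g⁻¹ • x) := by simp [matVec]
    _ = g⁻¹ • x := by simp [matVec, hdet]

theorem IsOrliczSLCovariant.map_comp_inv_smul (hcov : IsOrliczSLCovariant φ Ψ) {h : En n → ℝ}
    (hh : MemOrlicz φ h) (g : SpecialLinearGroup ℝ (En n)) :
    Ψ (fun x => h (g⁻¹ • x)) = g • Ψ h := by
  obtain ⟨ϑ, hdet, hϑ, hϑinv⟩ := exists_matrix_matVec_eq_smul g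
  simpa only [hϑ, hϑinv] using hcov h hh ϑ hdet

theorem IsOrliczSLCovariant.map_zero (hcov : IsOrliczSLCovariant φ Ψ) (hn : 2 ≤ n)
    (hφ : IsYoung φ) : Ψ (fun _ => 0) = 0 :=
  eq_zero_of_forall_specialLinearGroup_smul_eq (K := ℝ) (by rwa [finrank_euclideanSpace_fin])
    fun g => (hcov.map_comp_inv_smul (memOrlicz_zero hφ) g).symm

theorem IsOrliczSLCovariant.map_indicator_smul (hcov : IsOrliczSLCovariant φ Ψ)
    (hφ : IsYoung φ) (α : ℝ) (g : SpecialLinearGroup ℝ (En n)) {M : Set (En n)}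
    (hM : MeasurableSet M) (hMb : IsBounded M) :
    Ψ ((g • M).indicator fun _ => α) = g • Ψ (M.indicator fun _ => α) := by
  rw [← hcov.map_comp_inv_smul (memOrlicz_indicator_const hφ hM hMb α) g,
    ← preimage_smul_inv]
  rfl

theorem exists_map_indicator_eq_smul_momentSet (hn : 2 ≤ n) (hφ : IsYoung φ)
    (hae : RespectsAE φ Ψ) (hval : IsOrliczValuation φ Ψ) (hcov : IsOrliczSLCovariant φ Ψ)
    (hcont : OrliczContinuous φ Ψ) (α : ℝ) :
    ∃ c : ℝ, ∀ M : Set (En n), MeasurableSet M → IsBounded M →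
      Ψ (M.indicator fun _ => α) = c • momentSet M :=
  (isAbsolutelyContinuousCharge_map_indicator hφ hae hval hcont (hcov.map_zero hn hφ)
    α).exists_eq_const_smul_setIntegral (by rwa [finrank_euclideanSpace_fin])
    fun g _ hM hMb => hcov.map_indicator_smul hφ α g hM hMb

end IndicatorValuation

/-- For `n ≥ 2` and a Young function `φ`, if `Ψ : L^φ(ℝⁿ, |x|dx) → ℝⁿ`
is a continuous, `SL(n)` covariant valuation, then there is a continuous `ξ : ℝ → ℝ` with
`ξ(0) = 0` such that `Ψ(α χ_M) = ξ(α) m(M)` for every `α ∈ ℝ`, every `R > 0` and every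
measurable `M ⊆ {x : |x| < R}`. -/
theorem statement10 (n : ℕ) (hn : 2 ≤ n) (φ : ℝ → ℝ) (hφ : IsYoung φ)
    (Ψ : (En n → ℝ) → En n) (hae : RespectsAE φ Ψ)
    (hval : IsOrliczValuation φ Ψ) (hcov : IsOrliczSLCovariant φ Ψ)
    (hcont : OrliczContinuous φ Ψ) :
    ∃ ξ : ℝ → ℝ, Continuous ξ ∧ ξ 0 = 0 ∧
      ∀ (α R : ℝ) (M : Set (En n)), 0 < R → MeasurableSet M →
        M ⊆ {x : En n | ‖x‖ < R} →
        Ψ (M.indicator fun _ => α) = ξ α • momentSet M := by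
  choose ξ hξ using exists_map_indicator_eq_smul_momentSet hn hφ hae hval hcov hcont
  have : Nontrivial (Fin n) := Fin.nontrivial_iff_two_le.2 hn
  obtain ⟨K, hK, hmK⟩ : ∃ K : Set (En n), IsCompact K ∧ momentSet K ≠ 0 :=
    exists_isCompact_setIntegral_ne_zero
  have hξK (α : ℝ) : ξ α • momentSet K = Ψ (K.indicator fun _ => α) :=
    (hξ α K hK.measurableSet hK.isBounded).symm
  refine ⟨ξ, ?_, ?_, fun α R M _ hM hMR => ?_⟩
  · refine (isClosedEmbedding_smul_left (𝕜 := ℝ) hmK).continuous_iff.2 ?_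
    simpa only [Function.comp_def, hξK] using
      hcont.continuous_map_indicator hφ hK.measurableSet hK.isBounded
  · have hzero : ξ 0 • momentSet K = 0 := by rw [hξK, indicator_zero, hcov.map_zero hn hφ]
    exact (smul_eq_zero_iff_left hmK).1 hzero
  · refine hξ α M hM (Metric.isBounded_ball.subset (t := Metric.ball 0 R) ?_)
    exact fun x hx => mem_ball_zero_iff.2 (hMR hx)

end
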